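/- In L_spc, every K-program can be rewritten into a unique minimal K-program: for each K-program P there is exactly one minimal first canonical K-form P' such that P = P' is derivable in L_spc. Consequently, single-pass congruence of K-programs is decidable (assuming decidable equality on the set A of basic instructions). -/

import Mathlib

/-- Primitive instructions over a set `A` of basic instructions:
basic instructions `a`, positive tests `+a`, negative tests `-a`,
jump instructions `#k` and the termination instruction `!`. -/
inductive PrimInstr (A : Type) : Type where
  | basic (a : A)
  | pos (a : A)
  | neg (a : A)
  | jump (k : Nat)
  | halt
deriving DecidableEq

/-- Instructions of the semigroup `L`: primitive instructions and
repeat instructions (repeaters) `↰n`.  (Genuine repeaters have `n ≥ 1`;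
this is imposed as a hypothesis wherever relevant.) -/
inductive Instr (A : Type) : Type where
  | prim (u : PrimInstr A)
  | rep (n : Nat)
deriving DecidableEq

/-- Is this instruction a repeater? -/
def Instr.isRep {A : Type} : Instr A → Bool
  | .rep _ => true
  | .prim _ => false

/-- `↰n` is a genuine repeat instruction only for `n ≥ 1`. -/
def Instr.valid {A : Type} : Instr A → Prop
  | .prim _ => True
  | .rep n => 1 ≤ n

/-- Terms of the semigroup `L`: finite nonempty sequences of instructions
under (associative) concatenation. -/
inductive LTerm (A : Type) : Type where
  | instr (i : Instr A)
  | seq (s t : LTerm A)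
deriving DecidableEq

/-- The (nonempty) sequence of instructions an `L`-term consists of. -/
def LTerm.flat {A : Type} : LTerm A → List (Instr A)
  | .instr i => [i]
  | .seq s t => s.flat ++ t.flat

/-- `cat [i_1, …, i_n] t` is the `L`-term `i_1 ; … ; i_n ; t`. -/
def cat {A : Type} : List (Instr A) → LTerm A → LTerm A
  | [], t => t
  | i :: l, t => (LTerm.instr i).seq (cat l t)

/-- `pcat [u_1, …, u_n] t` is the `L`-term `u_1 ; … ; u_n ; t`
for primitive instructions `u_i`. -/
def pcat {A : Type} (l : List (PrimInstr A)) (t : LTerm A) : LTerm A :=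
  cat (l.map Instr.prim) t

/-- `listPow l m` is the `m`-fold concatenation `l^m` of the list `l`. -/
def listPow {α : Type} (l : List α) : ℕ → List α
  | 0 => []
  | n+1 => l ++ listPow l n

/-- The primitive instructions occurring in an instruction sequence. -/
def primsOf {A : Type} (l : List (Instr A)) : List (PrimInstr A) :=
  l.filterMap fun i => match i with
    | .prim u => some u
    | .rep _ => none

/-- The counter of the final repeat instruction of an instruction sequence, if any. -/
def repOf {A : Type} (l : List (Instr A)) : Option ℕ :=
  match l.getLast? with
  | some (.rep n) => some n
  | _ => none

/-- Position lookup for the SPI denoted by `u_1 ; … ; u_k ; ↰n` (`us` the list of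
the `u_i`): positions beyond the end wrap around through the last `n` instructions. -/
def kAt {A : Type} (us : List (PrimInstr A)) (n : ℕ) (p : ℕ) : Option (PrimInstr A) :=
  if p < us.length then us[p]?
  else us[us.length - n + (p - (us.length - n)) % n]?

/-- The SPI denoted by a `K`-program, given as position lookup on its
instruction sequence: a repeater-free `K`-program `u_1 ; … ; u_n` denotes
`u_1 ; … ; u_n` and `u_1 ; … ; u_k ; ↰n` (`n ≤ k`) denotes `u_1 ; … ; u_{k-n}`
followed by the infinite repetition of `u_{k-n+1} ; … ; u_k`. -/
def kDen {A : Type} (l : List (Instr A)) : ℕ → Option (PrimInstr A) :=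
  match repOf l with
  | none => fun p => (primsOf l)[p]?
  | some n => kAt (primsOf l) n

/-- `K`-programs: first canonical `L`-forms `u_1 ; … ; u_k` (all `u_i`
primitive), or `u_1 ; … ; u_k ; ↰n` with `1 ≤ n ≤ k`. -/
def IsKProg {A : Type} (t : LTerm A) : Prop :=
  (∃ (u : PrimInstr A) (us : List (PrimInstr A)), t.flat = (u :: us).map Instr.prim) ∨
  (∃ (u : PrimInstr A) (us : List (PrimInstr A)) (n : ℕ),
     t.flat = (u :: us).map Instr.prim ++ [Instr.rep n] ∧ 1 ≤ n ∧ n ≤ (u :: us).length)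

/-- The proof system `L_spc`: equational-logic derivability from the axioms (1)-(4) for single-pass congruence on `L` (associativity, unfolding of repeat counters, absorption `↰n ; X = ↰n`, and rotation), where `u_i`, `v_j` range over primitive instructions and `m, n ≥ 1`. -/
inductive DerivLspc {{A : Type}} : LTerm A → LTerm A → Prop
  | refl (t : LTerm A) : DerivLspc t t
  | symm {{s t : LTerm A}} : DerivLspc s t → DerivLspc t s
  | trans {{s t u : LTerm A}} : DerivLspc s t → DerivLspc t u → DerivLspc s u
  | seq_congr {{s s' t t' : LTerm A}} : DerivLspc s s' → DerivLspc t t' → DerivLspc (s.seq t) (s'.seq t')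
  | assoc (s t u : LTerm A) : DerivLspc ((s.seq t).seq u) (s.seq (t.seq u))
  | ax2 (u : PrimInstr A) (us : List (PrimInstr A)) (m : ℕ) (hm : 1 ≤ m) :
      DerivLspc (pcat (u :: us) (.instr (.rep (u :: us).length)))
          (pcat (listPow (u :: us) m) (.instr (.rep (m * (u :: us).length))))
  | ax3 (n : ℕ) (hn : 1 ≤ n) (t : LTerm A) :
      DerivLspc ((LTerm.instr (.rep n)).seq t) (.instr (.rep n))
  | ax4 (u : PrimInstr A) (us : List (PrimInstr A)) (v : PrimInstr A) (vs : List (PrimInstr A)) :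
      DerivLspc
        (pcat ((u :: us) ++ (v :: vs)) (.instr (.rep ((u :: us).length + (v :: vs).length))))
        (pcat ((u :: us) ++ (v :: vs) ++ (u :: us)) (.instr (.rep ((u :: us).length + (v :: vs).length))))

/-- The repetition-free `L`-term `u_1 ; … ; u_n` (junk for the empty list,
which never occurs under the hypotheses used). -/
def ofPrims {A : Type} : List (PrimInstr A) → LTerm A
  | [] => .instr (.rep 1)
  | [u] => .instr (.prim u)
  | u :: v :: l => (LTerm.instr (.prim u)).seq (ofPrims (v :: l))

/-- The canonical `L`-term determined by the data of a first canonical `K`-form: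
a list of primitive instructions and an optional final repeat counter. -/
def ofData {A : Type} (us : List (PrimInstr A)) : Option ℕ → LTerm A
  | none => ofPrims us
  | some n => pcat us (.instr (.rep n))

/-- The data `(us, r)` describes a first canonical `K`-form: `us` is nonempty
and, if a repeater `↰n` is present, `1 ≤ n ≤ k` where `k` is the number of
preceding primitive instructions. -/
def IsKData {A : Type} (c : List (PrimInstr A) × Option ℕ) : Prop :=
  c.1 ≠ [] ∧
  match c.2 with
  | none => True
  | some n => 1 ≤ n ∧ n ≤ c.1.length

/-- The instruction sequence (flattening) of the `K`-form described by data `(us, r)`. -/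
def flatData {A : Type} (c : List (PrimInstr A) × Option ℕ) : List (Instr A) :=
  c.1.map Instr.prim ++ (match c.2 with
    | none => []
    | some n => [Instr.rep n])

/-- The number of instructions of the `K`-form described by data `(us, r)`. -/
def dataSize {A : Type} (c : List (PrimInstr A) × Option ℕ) : ℕ :=
  c.1.length + (match c.2 with
    | none => 0
    | some _ => 1)

/-- Minimal first canonical `K`-forms: a repeater-free `K`-program is minimal by
definition; `u_1 ; … ; u_k ; ↰n` is minimal if its repeating part
`u_{k-n+1} ; … ; u_k` cannot be made smaller with axiom (2) (it is not a proper
power of a shorter sequence) and its non-repeating part `u_1 ; … ; u_{k-n}`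
cannot be made smaller with axiom (4) (no nonempty suffix of the non-repeating
part coincides with the corresponding suffix of the repeating part). -/
def MinKData {A : Type} (c : List (PrimInstr A) × Option ℕ) : Prop :=
  match c.2 with
  | none => True
  | some n =>
      (¬ ∃ m, 1 ≤ m ∧ m ≤ c.1.length - n ∧
          (c.1.take (c.1.length - n)).drop (c.1.length - n - m) =
            (c.1.drop (c.1.length - n)).drop (n - m)) ∧
      (¬ ∃ (m : ℕ) (s : List (PrimInstr A)), 2 ≤ m ∧ c.1.drop (c.1.length - n) = listPow s m)

/-! A non-repeater-free `K`-form `x ; w ; ↰|w|` denotes the ultimately periodic word `x w^ω`.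
Derivable equations preserve the SPI, and axioms (2) and (4) shorten `x` and `w` until `w` is not a
proper power and `x` and `w` do not end in the same instruction. Such a pair can be read off from
`x w^ω`: `|x|` is its least preperiod, and `|w|` the least period from there on, because the periods
of a word are closed under `gcd`. -/

section EventuallyPeriodic

variable {β : Type*} {f g : ℕ → β} {a n : ℕ}

theorem add_mul_eq_of_forall_ge (h : ∀ p, a ≤ p → f (p + n) = f p) (k : ℕ) {p : ℕ}
    (hp : a ≤ p) : f (p + k * n) = f p := by
  induction k with
  | zero => rw [Nat.zero_mul, Nat.add_zero]
  | succ k ih => rw [Nat.succ_mul, ← Nat.add_assoc, h _ (Nat.le_add_right_of_le hp), ih]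

theorem eq_of_forall_lt_of_forall_ge (hn : 0 < n) (hf : ∀ p, a ≤ p → f (p + n) = f p)
    (hg : ∀ p, a ≤ p → g (p + n) = g p) (h : ∀ p < a + n, f p = g p) : f = g := by
  funext p
  induction p using Nat.strong_induction_on with
  | _ p ih =>
    obtain hp | hp := lt_or_ge p (a + n)
    · exact h p hp
    · obtain ⟨q, rfl⟩ : ∃ q, p = q + n := Nat.exists_eq_add_of_le' (Nat.le_of_add_left_le hp)
      have hq : a ≤ q := Nat.le_of_add_le_add_right hp
      rw [hf q hq, hg q hq, ih q (Nat.lt_add_of_pos_right hn)]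

end EventuallyPeriodic

section Stream

variable {α : Type*} {s t : Stream' α} {l : List α} {a m n : ℕ}

open Stream'

theorem eq_of_eq_append_stream (hl : l ≠ []) (hs : s = l ++ₛ s) (ht : t = l ++ₛ t) : s = t := by
  ext p
  induction p using Nat.strong_induction_on with
  | _ p ih =>
    rw [hs, ht]
    obtain hp | hp := lt_or_ge p l.length
    · rw [get_append_left _ _ _ hp, get_append_left _ _ _ hp]
    · obtain ⟨q, rfl⟩ := Nat.exists_eq_add_of_le hp
      rw [get_append_right, get_append_right]
      exact ih q (Nat.lt_add_of_pos_left (List.length_pos_of_ne_nil hl))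

theorem drop_length_cycle (hl : l ≠ []) : (cycle l hl).drop l.length = cycle l hl := by
  nth_rw 1 [cycle_eq]
  exact drop_append_stream l _

theorem take_length_cycle (hl : l ≠ []) : (cycle l hl).take l.length = l := by
  rw [cycle_eq, take_append_of_le_length _ _ _ le_rfl, List.take_length]

theorem drop_mul_eq_self (h : s.drop n = s) (k : ℕ) : s.drop (n * k) = s := by
  induction k with
  | zero => rfl
  | succ k ih => rw [Nat.mul_succ, ← drop_drop, ih, h]

theorem drop_gcd_eq_self (hm : s.drop m = s) (hn : s.drop n = s) : s.drop (m.gcd n) = s := by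
  induction m, n using Nat.gcd.induction with
  | H0 n => rwa [Nat.gcd_zero_left]
  | H1 m n _ ih =>
    rw [Nat.gcd_rec]
    refine ih ?_ hm
    rw [← Nat.div_add_mod n m, ← drop_drop, drop_mul_eq_self hm] at hn
    exact hn

theorem drop_eq_self_of_drop_drop (hm : 0 < m) (hs : s.drop m = s)
    (h : (s.drop a).drop n = s.drop a) : s.drop n = s := by
  have hs' : (s.drop a).drop (m * a - a) = s := by
    rw [drop_drop, Nat.add_sub_cancel' (Nat.le_mul_of_pos_left a hm), drop_mul_eq_self hs]
  rw [← hs', drop_drop, Nat.add_comm, ← drop_drop, h]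

theorem get_cycle (hl : l ≠ []) (p : ℕ) :
    some ((cycle l hl).get p) = l[p % l.length]? := by
  have hmod : p % l.length < l.length := Nat.mod_lt _ (List.length_pos_of_ne_nil hl)
  have hget : (cycle l hl).get p = (cycle l hl).get (p % l.length) := by
    nth_rw 2 [← drop_mul_eq_self (drop_length_cycle hl) (p / l.length)]
    rw [get_drop, Nat.div_add_mod]
  rw [hget, List.getElem?_eq_getElem hmod, cycle_eq, get_append_left _ _ _ hmod]

end Stream

section Word

variable {α : Type} {x y w v : List α}

open Stream'

theorem length_listPow (w : List α) (m : ℕ) : (listPow w m).length = m * w.length := by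
  induction m with
  | zero => rw [listPow, List.length_nil, Nat.zero_mul]
  | succ m ih => rw [listPow, List.length_append, ih, Nat.succ_mul, Nat.add_comm]

theorem take_mul_eq_listPow {s : Stream' α} {n : ℕ} (h : s.drop n = s) (k : ℕ) :
    s.take (k * n) = listPow (s.take n) k := by
  induction k with
  | zero => rw [Nat.zero_mul, take_zero, listPow]
  | succ k ih => rw [Nat.succ_mul, Nat.add_comm, take_add, h, ih, listPow]

theorem listPow_ne_nil (hw : w ≠ []) {m : ℕ} (hm : 1 ≤ m) : listPow w m ≠ [] := by
  apply List.ne_nil_of_length_pos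
  rw [length_listPow]
  exact Nat.mul_pos hm (List.length_pos_of_ne_nil hw)

theorem cycle_listPow (hw : w ≠ []) {m : ℕ} (hm : 1 ≤ m) :
    cycle (listPow w m) (listPow_ne_nil hw hm) = cycle w hw := by
  refine eq_of_eq_append_stream (listPow_ne_nil hw hm) (cycle_eq _ _) ?_
  clear hm
  induction m with
  | zero => rfl
  | succ m ih => rw [listPow, append_append_stream, ← ih, ← cycle_eq]

theorem append_cycle_append (h : y ++ v ≠ []) (h' : v ++ y ≠ []) :
    y ++ₛ cycle (v ++ y) h' = cycle (y ++ v) h := by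
  refine eq_of_eq_append_stream h ?_ (cycle_eq _ _)
  nth_rw 1 [cycle_eq (v ++ y) h']
  rw [append_append_stream, append_append_stream]

/-- Words that are not proper powers: the repeating parts that axiom (2) cannot shorten. -/
def IsPrimitiveWord (w : List α) : Prop :=
  ¬ ∃ (m : ℕ) (s : List α), 2 ≤ m ∧ w = listPow s m

theorem IsPrimitiveWord.length_dvd (hprim : IsPrimitiveWord w) (hw : w ≠ []) {d : ℕ}
    (hd : (cycle w hw).drop d = cycle w hw) : w.length ∣ d := by
  have hgcd := drop_gcd_eq_self (drop_length_cycle hw) hd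
  obtain ⟨k, hk⟩ := exists_eq_mul_left_of_dvd (Nat.gcd_dvd_left w.length d)
  have hpow : w = listPow ((cycle w hw).take (w.length.gcd d)) k := by
    rw [← take_mul_eq_listPow hgcd, ← hk, take_length_cycle]
  have hk1 : k = 1 := by
    have hk2 : ¬ 2 ≤ k := fun h2 => hprim ⟨k, _, h2, hpow⟩
    have hk0 : k ≠ 0 := by
      rintro rfl
      exact hw hpow
    omega
  rw [hk1, Nat.one_mul] at hk
  rw [hk]
  exact Nat.gcd_dvd_right w.length d

/-- Pairs `(x, w)` that represent the ultimately periodic word `x w^ω` in its shortest form: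
axiom (4) cannot shorten `x` and axiom (2) cannot shorten `w`. -/
structure IsReducedLasso (x w : List α) : Prop where
  eq_nil_of_suffix : ∀ y, y <:+ x → y <:+ w → y = []
  primitive : IsPrimitiveWord w

theorem IsReducedLasso.length_le (h : IsReducedLasso y v) (hw : w ≠ []) (hv : v ≠ [])
    (heq : x ++ₛ cycle w hw = y ++ₛ cycle v hv) : y.length ≤ x.length := by
  by_contra! hlt
  obtain ⟨y, b, rfl⟩ := List.eq_nil_or_concat' y |>.resolve_left (by rintro rfl; simp at hlt)
  obtain ⟨k, hk⟩ : ∃ k, y.length = x.length + k :=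
    Nat.exists_eq_add_of_le (by simpa [Nat.lt_succ_iff] using hlt)
  have ht : (cycle w hw).drop k = b :: cycle v hv := by
    rw [← drop_append_stream x (cycle w hw), drop_drop, ← hk, heq, append_append_stream,
      drop_append_stream]
    rfl
  have hperiod : (b :: cycle v hv).drop v.length = b :: cycle v hv := by
    refine drop_eq_self_of_drop_drop (a := 1) (List.length_pos_of_ne_nil hw) ?_
      (drop_length_cycle hv)
    rw [← ht, drop_drop, Nat.add_comm, ← drop_drop, drop_length_cycle]
  obtain ⟨v, c, rfl⟩ := List.eq_nil_or_concat' v |>.resolve_left hv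
  have hbc : b = c := by
    have hget := congrArg (fun s => Stream'.get s 0) hperiod
    rw [get_drop, cycle_eq] at hget
    simpa [get_append_left] using hget.symm
  subst hbc
  exact absurd (h.eq_nil_of_suffix [b] (List.suffix_append _ _) (List.suffix_append _ _))
    (List.cons_ne_nil _ _)

theorem IsReducedLasso.unique (hxw : IsReducedLasso x w) (hyv : IsReducedLasso y v)
    (hw : w ≠ []) (hv : v ≠ []) (heq : x ++ₛ cycle w hw = y ++ₛ cycle v hv) :
    x = y ∧ w = v := by
  have hlen : x.length = y.length :=
    le_antisymm (hxw.length_le hv hw heq.symm) (hyv.length_le hw hv heq)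
  obtain rfl : x = y := append_left_injective _ _ _ _ heq hlen
  have hcycle : cycle w hw = cycle v hv := append_right_injective _ _ _ heq
  have hwv : w.length ∣ v.length :=
    hxw.primitive.length_dvd hw (by rw [hcycle, drop_length_cycle])
  have hvw : v.length ∣ w.length :=
    hyv.primitive.length_dvd hv (by rw [← hcycle, drop_length_cycle])
  refine ⟨rfl, ?_⟩
  rw [← take_length_cycle hw, hcycle, Nat.dvd_antisymm hwv hvw, take_length_cycle]

end Word

section SPI

variable {A : Type} {x w : List (PrimInstr A)} {c d : List (PrimInstr A) × Option ℕ}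

open Stream'

/-- The data of the first canonical form `x ; w ; ↰|w|`, which denotes `x w^ω` if `w ≠ []`. -/
def lasso (x w : List (PrimInstr A)) : List (PrimInstr A) × Option ℕ :=
  (x ++ w, some w.length)

theorem IsKData.eq_lasso (hc : IsKData c) {n : ℕ} (hn : c.2 = some n) :
    ∃ x w, w ≠ [] ∧ c = lasso x w := by
  obtain ⟨us, _⟩ := c
  obtain rfl := hn
  obtain ⟨-, hpos, hle⟩ := hc
  refine ⟨us.take (us.length - n), us.drop (us.length - n), ?_, ?_⟩
  · rw [ne_eq, List.drop_eq_nil_iff, Nat.not_le]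
    exact Nat.sub_lt (Nat.lt_of_lt_of_le hpos hle) hpos
  · rw [lasso, List.take_append_drop, List.length_drop, Nat.sub_sub_self hle]

theorem isKData_lasso (x : List (PrimInstr A)) (hw : w ≠ []) : IsKData (lasso x w) :=
  ⟨List.append_ne_nil_of_right_ne_nil x hw, List.length_pos_of_ne_nil hw, by simp [lasso]⟩

theorem minKData_lasso_iff : MinKData (lasso x w) ↔ IsReducedLasso x w := by
  have hsub : (x ++ w).length - w.length = x.length := by simp
  simp only [MinKData, lasso, hsub, List.take_left, List.drop_left]
  constructor
  · rintro ⟨hsuffix, hprim⟩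
    refine ⟨fun y hx hw => ?_, hprim⟩
    by_contra hy
    refine hsuffix ⟨y.length, List.length_pos_of_ne_nil hy, hx.length_le, ?_⟩
    rw [← List.suffix_iff_eq_drop.mp hx, ← List.suffix_iff_eq_drop.mp hw]
  · rintro ⟨hsuffix, hprim⟩
    refine ⟨?_, hprim⟩
    rintro ⟨m, hm, hmx, heq⟩
    have hnil := hsuffix _ (List.drop_suffix _ x) (heq ▸ List.drop_suffix _ w)
    rw [List.drop_eq_nil_iff] at hnil
    omega

theorem kAt_lasso (x : List (PrimInstr A)) (hw : w ≠ []) :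
    kAt (x ++ w) w.length = fun p => some ((x ++ₛ cycle w hw).get p) := by
  funext p
  have hsub : (x ++ w).length - w.length = x.length := by simp
  rw [kAt, hsub]
  split_ifs with hp
  · rw [cycle_eq, ← append_append_stream, get_append_left _ _ _ hp, List.getElem?_eq_getElem hp]
  · obtain ⟨q, rfl⟩ : ∃ q, p = x.length + q :=
      Nat.exists_eq_add_of_le (by rw [List.length_append] at hp; omega)
    rw [Nat.add_sub_cancel_left, List.getElem?_append_right (Nat.le_add_right _ _),
      Nat.add_sub_cancel_left, get_append_right, get_cycle]

theorem kAt_listPow (x : List (PrimInstr A)) (hw : w ≠ []) {m : ℕ} (hm : 1 ≤ m) :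
    kAt (x ++ listPow w m) (m * w.length) = kAt (x ++ w) w.length := by
  rw [← length_listPow, kAt_lasso x (listPow_ne_nil hw hm), cycle_listPow hw hm, kAt_lasso x hw]

theorem kAt_rotate (x : List (PrimInstr A)) {y z : List (PrimInstr A)} (hy : y ≠ []) :
    kAt (x ++ (y ++ z ++ y)) (y.length + z.length) = kAt (x ++ (y ++ z)) (y.length + z.length) := by
  have hyz : y ++ z ≠ [] := List.append_ne_nil_of_left_ne_nil hy z
  have hzy : z ++ y ≠ [] := List.append_ne_nil_of_right_ne_nil z hy
  have hrot := kAt_lasso (x ++ y) hzy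
  rw [append_append_stream, append_cycle_append hyz, ← kAt_lasso x hyz] at hrot
  simpa only [List.append_assoc, List.length_append, Nat.add_comm z.length] using hrot

theorem primsOf_flatData (c : List (PrimInstr A) × Option ℕ) : primsOf (flatData c) = c.1 := by
  obtain ⟨us, _ | n⟩ := c <;> simp [primsOf, flatData, List.filterMap_map]

theorem repOf_flatData (c : List (PrimInstr A) × Option ℕ) : repOf (flatData c) = c.2 := by
  obtain ⟨us, _ | n⟩ := c
  · obtain rfl | ⟨vs, v, rfl⟩ := List.eq_nil_or_concat' us <;> simp [repOf, flatData]
  · simp [repOf, flatData]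

theorem kDen_flatData_none (us : List (PrimInstr A)) :
    kDen (flatData (us, none)) = fun p => us[p]? := by
  rw [kDen, repOf_flatData, primsOf_flatData]

theorem kDen_flatData_some (us : List (PrimInstr A)) (n : ℕ) :
    kDen (flatData (us, some n)) = kAt us n := by
  rw [kDen, repOf_flatData, primsOf_flatData]

theorem kDen_flatData_lasso (x : List (PrimInstr A)) (hw : w ≠ []) :
    kDen (flatData (lasso x w)) = fun p => some ((x ++ₛ cycle w hw).get p) := by
  rw [lasso, kDen_flatData_some, kAt_lasso x hw]

theorem kDen_flatData_none_ne_lasso (us x : List (PrimInstr A)) (hw : w ≠ []) :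
    kDen (flatData (us, none)) ≠ kDen (flatData (lasso x w)) := by
  intro h
  simpa [kDen_flatData_none, kDen_flatData_lasso x hw] using congrFun h us.length

theorem eq_of_kDen_flatData_eq (hc : IsKData c) (hd : IsKData d) (mc : MinKData c)
    (md : MinKData d) (h : kDen (flatData c) = kDen (flatData d)) : c = d := by
  rcases hcr : c.2 with _ | n <;> rcases hdr : d.2 with _ | m
  · obtain ⟨us, _⟩ := c
    obtain ⟨vs, _⟩ := d
    obtain rfl := hcr
    obtain rfl := hdr
    rw [kDen_flatData_none, kDen_flatData_none] at h
    rw [List.ext_getElem? (congrFun h)]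
  · obtain ⟨us, _⟩ := c
    obtain rfl := hcr
    obtain ⟨y, v, hv, rfl⟩ := hd.eq_lasso hdr
    exact absurd h (kDen_flatData_none_ne_lasso us y hv)
  · obtain ⟨vs, _⟩ := d
    obtain rfl := hdr
    obtain ⟨x, w, hw, rfl⟩ := hc.eq_lasso hcr
    exact absurd h.symm (kDen_flatData_none_ne_lasso vs x hw)
  · obtain ⟨x, w, hw, rfl⟩ := hc.eq_lasso hcr
    obtain ⟨y, v, hv, rfl⟩ := hd.eq_lasso hdr
    rw [kDen_flatData_lasso x hw, kDen_flatData_lasso y hv] at h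
    have hword : x ++ₛ cycle w hw = y ++ₛ cycle v hv :=
      Stream'.ext fun p => Option.some.inj (congrFun h p)
    obtain ⟨rfl, rfl⟩ :=
      (minKData_lasso_iff.mp mc).unique (minKData_lasso_iff.mp md) hw hv hword
    rfl

end SPI

section Soundness

variable {A : Type} {s t : LTerm A} {c d : List (PrimInstr A) × Option ℕ}

theorem flat_cat (l : List (Instr A)) (t : LTerm A) : (cat l t).flat = l ++ t.flat := by
  induction l with
  | nil => rfl
  | cons i l ih => rw [cat, LTerm.flat, ih, LTerm.flat, List.cons_append, List.nil_append,
      List.cons_append]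

theorem flat_ofData (hc : c.1 ≠ []) : (ofData c.1 c.2).flat = flatData c := by
  obtain ⟨us, _ | n⟩ := c
  · induction us using ofPrims.induct with
    | case1 => exact absurd rfl hc
    | case2 u => rfl
    | case3 u v us ih => simpa [ofData, ofPrims, LTerm.flat, flatData] using ih (by simp)
  · exact flat_cat _ _

theorem IsKProg.exists_flat_eq_flatData {P : LTerm A} (hP : IsKProg P) :
    ∃ c, IsKData c ∧ P.flat = flatData c := by
  obtain ⟨u, us, h⟩ | ⟨u, us, n, h, hpos, hle⟩ := hP
  · exact ⟨(u :: us, none), ⟨List.cons_ne_nil _ _, trivial⟩, by simpa [flatData] using h⟩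
  · exact ⟨(u :: us, some n), ⟨List.cons_ne_nil _ _, hpos, hle⟩, h⟩

/-- The SPI of a term executed after the primitive instructions `x`, where `k` maps all the
instructions executed before the end of the term to the resulting SPI. Passing on `x` makes the
semantics compositional: a repeater may count back beyond the beginning of its term. -/
def LTerm.spiAfter : LTerm A → (List (PrimInstr A) → ℕ → Option (PrimInstr A)) →
    List (PrimInstr A) → ℕ → Option (PrimInstr A)
  | .instr (.prim u), k, x => k (x ++ [u])
  | .instr (.rep n), _, x => kAt x n
  | .seq s t, k, x => s.spiAfter (t.spiAfter k) x

theorem spiAfter_pcat (us : List (PrimInstr A)) (t : LTerm A)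
    (k : List (PrimInstr A) → ℕ → Option (PrimInstr A)) (x : List (PrimInstr A)) :
    (pcat us t).spiAfter k x = t.spiAfter k (x ++ us) := by
  induction us generalizing x with
  | nil => rw [List.append_nil]; rfl
  | cons u us ih => rw [List.append_cons]; exact ih (x ++ [u])

theorem DerivLspc.spiAfter_eq (h : DerivLspc s t) : s.spiAfter = t.spiAfter := by
  induction h with
  | refl t => rfl
  | symm _ ih => exact ih.symm
  | trans _ _ ihst ihtu => exact ihst.trans ihtu
  | seq_congr _ _ ihs iht =>
    funext k x
    rw [LTerm.spiAfter, LTerm.spiAfter, ihs, iht]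
  | assoc s t u => rfl
  | ax2 u us m hm =>
    funext k x
    rw [spiAfter_pcat, spiAfter_pcat]
    exact (kAt_listPow x (List.cons_ne_nil u us) hm).symm
  | ax3 n _ t => rfl
  | ax4 u us v vs =>
    funext k x
    rw [spiAfter_pcat, spiAfter_pcat]
    exact (kAt_rotate x (List.cons_ne_nil u us)).symm

theorem spiAfter_ofData (hc : c.1 ≠ []) :
    (ofData c.1 c.2).spiAfter (fun us p => us[p]?) [] = kDen (flatData c) := by
  obtain ⟨us, _ | n⟩ := c
  · suffices h : ∀ x, (ofPrims us).spiAfter (fun us p => us[p]?) x = fun p => (x ++ us)[p]? by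
      rw [kDen_flatData_none]
      exact h []
    induction us using ofPrims.induct with
    | case1 => exact absurd rfl hc
    | case2 u => exact fun x => rfl
    | case3 u v us ih =>
      intro x
      rw [List.append_cons]
      exact ih (List.cons_ne_nil v us) (x ++ [u])
  · rw [kDen_flatData_some]
    exact spiAfter_pcat us _ _ []

theorem DerivLspc.kDen_eq (hc : c.1 ≠ []) (hd : d.1 ≠ [])
    (h : DerivLspc (ofData c.1 c.2) (ofData d.1 d.2)) :
    kDen (flatData c) = kDen (flatData d) := by
  rw [← spiAfter_ofData hc, ← spiAfter_ofData hd, h.spiAfter_eq]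

end Soundness

section Minimization

variable {A : Type} {s t : LTerm A} {x w : List (PrimInstr A)}

instance : Trans (@DerivLspc A) (@DerivLspc A) (@DerivLspc A) where
  trans := fun h h' => h.trans h'

theorem cat_append (l l' : List (Instr A)) (t : LTerm A) :
    cat (l ++ l') t = cat l (cat l' t) := by
  induction l with
  | nil => rfl
  | cons i l ih => rw [List.cons_append, cat, ih, cat]

theorem DerivLspc.cat_congr (l : List (Instr A)) (h : DerivLspc s t) :
    DerivLspc (cat l s) (cat l t) := by
  induction l with
  | nil => exact h
  | cons i l ih => exact .seq_congr (.refl _) ih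

theorem derivLspc_seq_cat_flat (s t : LTerm A) : DerivLspc (s.seq t) (cat s.flat t) := by
  induction s generalizing t with
  | instr i => exact .refl _
  | seq s s' ihs ihs' =>
    rw [LTerm.flat, cat_append]
    exact (DerivLspc.assoc s s' t).trans ((ihs _).trans ((ihs' t).cat_congr s.flat))

theorem exists_flat_eq_concat_derivLspc_cat (t : LTerm A) :
    ∃ l i, t.flat = l ++ [i] ∧ DerivLspc t (cat l (.instr i)) := by
  induction t with
  | instr i => exact ⟨[], i, rfl, .refl _⟩
  | seq s t _ iht =>
    obtain ⟨l, i, hflat, hderiv⟩ := iht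
    refine ⟨s.flat ++ l, i, by rw [LTerm.flat, hflat, List.append_assoc], ?_⟩
    rw [cat_append]
    exact (derivLspc_seq_cat_flat s t).trans (hderiv.cat_congr s.flat)

theorem derivLspc_of_flat_eq (h : s.flat = t.flat) : DerivLspc s t := by
  obtain ⟨l, i, hs, hsd⟩ := exists_flat_eq_concat_derivLspc_cat s
  obtain ⟨l', i', ht, htd⟩ := exists_flat_eq_concat_derivLspc_cat t
  obtain ⟨rfl, hi⟩ := List.append_inj' (hs.symm.trans (h.trans ht)) rfl
  obtain rfl := List.singleton_inj.mp hi
  exact hsd.trans htd.symm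

/-- The `L`-term `x ; w ; ↰|w|`. -/
def lassoTerm (x w : List (PrimInstr A)) : LTerm A := pcat (x ++ w) (.instr (.rep w.length))

theorem lassoTerm_append (x y w : List (PrimInstr A)) :
    lassoTerm (x ++ y) w = pcat x (lassoTerm y w) := by
  rw [lassoTerm, lassoTerm, pcat, pcat, pcat, List.append_assoc, List.map_append, cat_append]

theorem DerivLspc.lassoTerm_append {y y' w' : List (PrimInstr A)} (x : List (PrimInstr A))
    (h : DerivLspc (lassoTerm y w) (lassoTerm y' w')) :
    DerivLspc (lassoTerm (x ++ y) w) (lassoTerm (x ++ y') w') := by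
  rw [_root_.lassoTerm_append, _root_.lassoTerm_append]
  exact h.cat_congr _

theorem derivLspc_lassoTerm_listPow (x : List (PrimInstr A)) (hw : w ≠ []) {m : ℕ} (hm : 1 ≤ m) :
    DerivLspc (lassoTerm x w) (lassoTerm x (listPow w m)) := by
  obtain ⟨u, us, rfl⟩ := List.exists_cons_of_ne_nil hw
  have h : DerivLspc (lassoTerm [] (u :: us)) (lassoTerm [] (listPow (u :: us) m)) := by
    rw [lassoTerm, lassoTerm, length_listPow]
    exact .ax2 u us m hm
  simpa using h.lassoTerm_append x

theorem derivLspc_lassoTerm_rotate_of_ne_nil (x : List (PrimInstr A)) {y z : List (PrimInstr A)}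
    (hy : y ≠ []) (hz : z ≠ []) :
    DerivLspc (lassoTerm x (y ++ z)) (lassoTerm (x ++ y) (z ++ y)) := by
  obtain ⟨u, us, rfl⟩ := List.exists_cons_of_ne_nil hy
  obtain ⟨v, vs, rfl⟩ := List.exists_cons_of_ne_nil hz
  have h : DerivLspc (lassoTerm [] ((u :: us) ++ (v :: vs)))
      (lassoTerm (u :: us) ((v :: vs) ++ (u :: us))) := by
    rw [lassoTerm, lassoTerm, List.nil_append, ← List.append_assoc, List.length_append,
      List.length_append, Nat.add_comm (v :: vs).length]
    exact .ax4 u us v vs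
  simpa only [List.append_nil] using h.lassoTerm_append x

/-- Axiom (4) does not cover `z = []`; unfolding `y` to `y ; y` by axiom (2) first does. -/
theorem derivLspc_lassoTerm_rotate (x y z : List (PrimInstr A)) :
    DerivLspc (lassoTerm x (y ++ z)) (lassoTerm (x ++ y) (z ++ y)) := by
  obtain rfl | hy := eq_or_ne y []
  · rw [List.nil_append, List.append_nil, List.append_nil]
    exact .refl _
  obtain rfl | hz := eq_or_ne z []
  · have hsq : listPow y 2 = y ++ y := by simp only [listPow, List.append_nil]
    have hunfold (x) : DerivLspc (lassoTerm x y) (lassoTerm x (y ++ y)) :=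
      hsq ▸ derivLspc_lassoTerm_listPow x hy one_le_two
    rw [List.append_nil, List.nil_append]
    calc DerivLspc (lassoTerm x y) (lassoTerm x (y ++ y)) := hunfold x
      DerivLspc _ (lassoTerm (x ++ y) (y ++ y)) := derivLspc_lassoTerm_rotate_of_ne_nil x hy hy
      DerivLspc _ (lassoTerm (x ++ y) y) := (hunfold (x ++ y)).symm
  · exact derivLspc_lassoTerm_rotate_of_ne_nil x hy hz

theorem exists_shorter_derivLspc (hw : w ≠ []) (h : ¬ IsReducedLasso x w) :
    ∃ y v, v ≠ [] ∧ y.length + v.length < x.length + w.length ∧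
      DerivLspc (lassoTerm x w) (lassoTerm y v) := by
  by_cases hprim : IsPrimitiveWord w
  · obtain ⟨s, hsx, hsw, hs⟩ : ∃ s, s <:+ x ∧ s <:+ w ∧ s ≠ [] := by
      by_contra! hsuffix
      exact h ⟨hsuffix, hprim⟩
    obtain ⟨y, rfl⟩ := hsx
    obtain ⟨z, rfl⟩ := hsw
    refine ⟨y, s ++ z, List.append_ne_nil_of_left_ne_nil hs z, ?_,
      (derivLspc_lassoTerm_rotate y s z).symm⟩
    have hspos := List.length_pos_of_ne_nil hs
    simp only [List.length_append]
    omega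
  · obtain ⟨m, s, hm, rfl⟩ := not_not.mp hprim
    have hspos : 0 < s.length :=
      Nat.pos_of_mul_pos_left (length_listPow s m ▸ List.length_pos_of_ne_nil hw)
    have hs : s ≠ [] := List.ne_nil_of_length_pos hspos
    refine ⟨x, s, hs, ?_,
      (derivLspc_lassoTerm_listPow x hs (Nat.le_of_succ_le hm)).symm⟩
    rw [length_listPow]
    exact Nat.add_lt_add_left (lt_mul_of_one_lt_left hspos hm) _

theorem exists_isReducedLasso_derivLspc (x : List (PrimInstr A)) (hw : w ≠ []) :
    ∃ y v, v ≠ [] ∧ IsReducedLasso y v ∧ DerivLspc (lassoTerm x w) (lassoTerm y v) := by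
  induction hlen : x.length + w.length using Nat.strong_induction_on generalizing x w with
  | _ len ih =>
    by_cases hred : IsReducedLasso x w
    · exact ⟨x, w, hw, hred, .refl _⟩
    · obtain ⟨x', w', hw', hlt, hderiv⟩ := exists_shorter_derivLspc hw hred
      obtain ⟨y, v, hv, hyv, hderiv'⟩ := ih _ (hlen ▸ hlt) x' hw' rfl
      exact ⟨y, v, hv, hyv, hderiv.trans hderiv'⟩

theorem exists_minKData_derivLspc {c : List (PrimInstr A) × Option ℕ} (hc : IsKData c) :
    ∃ d : List (PrimInstr A) × Option ℕ,
      IsKData d ∧ MinKData d ∧ DerivLspc (ofData c.1 c.2) (ofData d.1 d.2) := by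
  rcases hr : c.2 with _ | n
  · exact ⟨c, hc, by rw [MinKData, hr]; trivial, hr ▸ .refl _⟩
  · obtain ⟨x, w, hw, rfl⟩ := hc.eq_lasso hr
    obtain ⟨y, v, hv, hyv, hderiv⟩ := exists_isReducedLasso_derivLspc x hw
    exact ⟨lasso y v, isKData_lasso y hv, minKData_lasso_iff.mpr hyv, hr ▸ hderiv⟩

end Minimization

section Decision

variable {A : Type}

/-- A preperiod of the SPI denoted by the canonical form `t`. -/
def LTerm.preperiod (t : LTerm A) : ℕ := (primsOf t.flat).length

/-- A period of the SPI denoted by the canonical form `t`. A finite SPI is constantly `none` from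
its end on, so that it has period `1`. -/
def LTerm.period (t : LTerm A) : ℕ := (repOf t.flat).getD 1

theorem IsKProg.period_pos {t : LTerm A} (ht : IsKProg t) : 0 < t.period := by
  obtain ⟨c, hc, hflat⟩ := ht.exists_flat_eq_flatData
  rw [LTerm.period, hflat, repOf_flatData]
  obtain ⟨us, _ | n⟩ := c
  · exact one_pos
  · exact hc.2.1

theorem kDen_add_period (t : LTerm A) {p : ℕ} (hp : t.preperiod ≤ p) :
    kDen t.flat (p + t.period) = kDen t.flat p := by
  rw [LTerm.preperiod] at hp
  rcases hr : repOf t.flat with _ | n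
  · simp only [kDen, hr, List.getElem?_eq_none hp,
      List.getElem?_eq_none (Nat.le_add_right_of_le hp)]
  · simp only [kDen, hr, LTerm.period, Option.getD_some, kAt]
    rw [if_neg (Nat.not_lt.mpr hp), if_neg (Nat.not_lt.mpr (Nat.le_add_right_of_le hp)),
      Nat.sub_add_comm ((Nat.sub_le _ n).trans hp), Nat.add_mod_right]

/-- A decision procedure for single-pass congruence: from the sum of their preperiods on, both SPIs
have the product of their periods as a period. It is a computable definition because the mere
existence of a Boolean function with the right values holds classically for every relation. -/
def decideSinglePassCongr [DecidableEq A] (Q R : LTerm A) : Bool :=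
  decide (∀ p < Q.preperiod + R.preperiod + Q.period * R.period, kDen Q.flat p = kDen R.flat p)

theorem decideSinglePassCongr_eq_true_iff [DecidableEq A] {Q R : LTerm A} (hQ : IsKProg Q)
    (hR : IsKProg R) : decideSinglePassCongr Q R = true ↔ kDen Q.flat = kDen R.flat := by
  rw [decideSinglePassCongr, decide_eq_true_iff]
  refine ⟨fun h => ?_, fun h p _ => congrFun h p⟩
  refine eq_of_forall_lt_of_forall_ge (Nat.mul_pos hQ.period_pos hR.period_pos) (fun p hp => ?_)
    (fun p hp => ?_) h
  · rw [Nat.mul_comm]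
    exact add_mul_eq_of_forall_ge (fun _ => kDen_add_period Q) _ (Nat.le_of_add_right_le hp)
  · exact add_mul_eq_of_forall_ge (fun _ => kDen_add_period R) _ (Nat.le_of_add_left_le hp)

end Decision

/-- In `L_spc`, every `K`-program can be rewritten into a unique minimal
`K`-program; consequently, single-pass congruence of `K`-programs is decidable
(assuming decidable equality on the basic instructions). -/
theorem unique_minimal_K_form_and_decidability (A : Type) (P : LTerm A)
    (hP : IsKProg P) :
    (∃! c : List (PrimInstr A) × Option ℕ,
        IsKData c ∧ MinKData c ∧ DerivLspc P (ofData c.1 c.2)) ∧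
    (∀ _ : DecidableEq A, ∃ f : LTerm A → LTerm A → Bool,
        ∀ Q R : LTerm A, IsKProg Q → IsKProg R →
          (f Q R = true ↔ kDen Q.flat = kDen R.flat)) := by
  refine ⟨?_, fun _ => ⟨decideSinglePassCongr, fun Q R => decideSinglePassCongr_eq_true_iff⟩⟩
  obtain ⟨c₀, hc₀, hflat⟩ := hP.exists_flat_eq_flatData
  have hPc₀ : DerivLspc P (ofData c₀.1 c₀.2) :=
    derivLspc_of_flat_eq (hflat.trans (flat_ofData hc₀.1).symm)
  obtain ⟨c, hc, hmin, hc₀c⟩ := exists_minKData_derivLspc hc₀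
  have hPc : DerivLspc P (ofData c.1 c.2) := hPc₀.trans hc₀c
  refine ⟨c, ⟨hc, hmin, hPc⟩, ?_⟩
  rintro d ⟨hd, hdmin, hPd⟩
  exact eq_of_kDen_flatData_eq hd hc hdmin hmin ((hPd.symm.trans hPc).kDen_eq hd.1 hc.1)
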